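/- In the symmetric group of permutations of the 9-element set {1, …, 9}, the subgroup generated by σ = (1 2 3)(4 5 6)(7 8 9) and τ₃ = (1 2 4)(3 7 5)(6 8 9) is isomorphic to the projective special linear group PSL(2, 𝔽₈) over the field with 8 elements; in particular it has order 504. -/

import Mathlib

open Equiv

/-!
`PSL(2, F)` acts faithfully on the projective line, and over a field `F` with 8 elements this line
has 9 points. An element fixing `∞`, `0` and `1` is trivial, so the only subgroup of `PSL(2, F)`
acting transitively on ordered triples of distinct points is `PSL(2, F)` itself, and its order is
then the number `9 * 8 * 7` of such triples. With a suitable labelling of the points by `Fin 9`,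
written through a root `α` of `X ^ 3 + X + 1`, both `σ` and `τ₃` are Möbius transformations. The
group they generate is transitive on triples: `σ * τ₃` is a 9-cycle, `σ * τ₃ * σ * τ₃⁻¹` fixes
`∞` and moves `0` to `1`, and `σ⁻¹ * τ₃` is `z ↦ α ^ 6 * z`, which permutes the 7 points other than
`∞` and `0` cyclically.
-/

namespace Dessin

open MulAction Projectivization
open scoped MatrixGroups LinearAlgebra.Projectivization

section GroupAction

variable {G β : Type*} [Group G] [MulAction G β]

theorem eq_of_isPretransitive_of_disjoint_stabilizer {H K : Subgroup G} (hHK : H ≤ K)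
    (hH : IsPretransitive H β) {b : β} (hK : Disjoint K (stabilizer G b)) : H = K := by
  refine le_antisymm hHK fun k hk ↦ ?_
  obtain ⟨h, hh⟩ := exists_smul_eq H b (k • b)
  have hfix : (h : G)⁻¹ * k ∈ stabilizer G b := by
    rw [mem_stabilizer_iff, mul_smul, inv_smul_eq_iff]
    exact hh.symm
  have hone : (h : G)⁻¹ * k = 1 :=
    Subgroup.disjoint_def.mp hK (K.mul_mem (K.inv_mem (hHK h.2)) hk) hfix
  rw [← inv_mul_eq_one.mp hone]
  exact h.2

theorem card_eq_of_disjoint_stabilizer {H : Subgroup G} (hH : IsPretransitive H β) {b : β}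
    (hdisj : Disjoint H (stabilizer G b)) : Nat.card H = Nat.card β := by
  have hbot : stabilizer H b = ⊥ := Subgroup.subgroupOf_eq_bot.mpr hdisj.symm
  rw [← index_stabilizer_of_transitive H b, hbot, Subgroup.index_bot]

theorem isMultiplyPretransitive_of_forall_exists {n : ℕ} (x : Fin n ↪ β)
    (hx : ∀ i b, (∀ j < i, x j ≠ b) → ∃ g : G, (∀ j < i, g • x j = x j) ∧ g • x i = b) :
    IsMultiplyPretransitive G β n := by
  refine (isPretransitive_iff_base x).mpr fun y ↦ ?_
  suffices ∀ k : ℕ, ∃ g : G, ∀ j : Fin n, j < k → g • x j = y j by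
    obtain ⟨g, hg⟩ := this n
    exact ⟨g, Function.Embedding.ext fun j ↦ hg j j.is_lt⟩
  intro k
  induction k with
  | zero => exact ⟨1, fun j hj ↦ absurd hj j.val.not_lt_zero⟩
  | succ k ih =>
    obtain ⟨g, hg⟩ := ih
    by_cases hk : k < n
    · obtain ⟨h, hfix, hh⟩ := hx ⟨k, hk⟩ (g⁻¹ • y ⟨k, hk⟩) fun j hj ↦ by
        rw [ne_eq, eq_inv_smul_iff, hg j hj, y.apply_eq_iff_eq]
        exact hj.ne
      refine ⟨g * h, fun j hj ↦ ?_⟩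
      rw [mul_smul]
      rcases Nat.lt_succ_iff_lt_or_eq.mp hj with hj | rfl
      · rw [hfix j hj, hg j hj]
      · rw [hh, smul_inv_smul]
    · exact ⟨g, fun j _ ↦ hg j (by lia)⟩

end GroupAction

section ProjectiveSpace

variable {ι K : Type*} [Field K]

theorem mem_center_of_smul_frame [Fintype ι] [DecidableEq ι] [Nonempty ι]
    {g : Matrix.SpecialLinearGroup ι K}
    (hsingle : ∀ i, g • Projectivization.mk K (Pi.single i 1 : ι → K) (by simp) =
      Projectivization.mk K (Pi.single i 1) (by simp))
    (hone : g • Projectivization.mk K (1 : ι → K) one_ne_zero =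
      Projectivization.mk K 1 one_ne_zero) :
    g ∈ Subgroup.center (Matrix.SpecialLinearGroup ι K) := by
  rw [smul_mk, mk_eq_mk_iff'] at hone
  obtain ⟨r, hr⟩ := hone
  have hdiag (i j : ι) (hij : i ≠ j) : g i j = 0 := by
    have hj := hsingle j
    rw [smul_mk, mk_eq_mk_iff'] at hj
    obtain ⟨c, hc⟩ := hj
    simpa [Matrix.SpecialLinearGroup.smul_def, Pi.single_apply, hij] using (congrFun hc i).symm
  have hrow (i : ι) : r = ∑ j, g i j := by
    simpa [Matrix.SpecialLinearGroup.smul_def, Matrix.mulVec, dotProduct] using congrFun hr i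
  have hconst (i : ι) : g i i = r := by
    rw [hrow i, Finset.sum_eq_single_of_mem i (Finset.mem_univ i) fun j _ hj ↦ hdiag i j hj.symm]
  have hscalar : Matrix.scalar ι r = g := by
    ext i j
    rcases eq_or_ne i j with rfl | hij
    · simp [hconst]
    · simp [hij, hdiag i j hij]
  refine Matrix.SpecialLinearGroup.mem_center_iff.mpr ⟨r, ?_, hscalar⟩
  rw [← g.det_coe, ← hscalar, Matrix.scalar_apply, Matrix.det_diagonal, Finset.prod_const,
    Finset.card_univ]

theorem mk_eq_mk_of_mul_eq_mul {v w : Fin 2 → K} (hv : v ≠ 0) (hw : w ≠ 0)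
    (h : v 0 * w 1 = v 1 * w 0) : Projectivization.mk K v hv = Projectivization.mk K w hw := by
  rw [mk_eq_mk_iff']
  by_cases hw0 : w 0 = 0
  · have hw1 : w 1 ≠ 0 := fun hw1 ↦ hw (funext (Fin.forall_fin_two.mpr ⟨hw0, hw1⟩))
    have hv0 : v 0 = 0 := by simpa [hw0, hw1] using h
    exact ⟨v 1 / w 1, funext (Fin.forall_fin_two.mpr
      ⟨by simp [hv0, hw0], div_mul_cancel₀ _ hw1⟩)⟩
  · exact ⟨v 0 / w 0, funext (Fin.forall_fin_two.mpr
      ⟨div_mul_cancel₀ _ hw0, by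
        rw [Pi.smul_apply, smul_eq_mul, div_mul_eq_mul_div, h, mul_div_cancel_right₀ _ hw0]⟩)⟩

variable [Fintype ι] [DecidableEq ι] {X : Type*} (e : X ≃ ℙ K (ι → K))

/-- The permutation representation of the projective special linear group on the points of
projective space, transported to a set `X` of labels for these points. -/
def permHom : Matrix.ProjectiveSpecialLinearGroup ι K →* Perm X :=
  e.symm.permCongrHom.toMonoidHom.comp PSLAction.toPermHom

theorem permHom_injective : Function.Injective (permHom e) :=
  e.symm.permCongrHom.injective.comp Matrix.ProjectiveSpecialLinearGroup.toPermHom_injective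

theorem apply_permHom_mk (g : Matrix.SpecialLinearGroup ι K) (x : X) :
    e (permHom e (QuotientGroup.mk g) x) = g • e x :=
  e.apply_symm_apply _

theorem permHom_mk_eq {g : Matrix.SpecialLinearGroup ι K} {π : Perm X}
    (h : ∀ x, g • e x = e (π x)) : permHom e (QuotientGroup.mk g) = π :=
  Equiv.ext fun x ↦ e.injective ((apply_permHom_mk e g x).trans (h x))

end ProjectiveSpace

section MonodromyGroup

/-- The first permutation of the monodromy pair, `(1 2 3)(4 5 6)(7 8 9)` on the labels
`0, …, 8`. -/
def σ : Perm (Fin 9) := c[0, 1, 2] * c[3, 4, 5] * c[6, 7, 8]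

/-- The second permutation of the monodromy pair, `(1 2 4)(3 7 5)(6 8 9)` on the labels
`0, …, 8`. -/
def τ₃ : Perm (Fin 9) := c[0, 1, 3] * c[2, 6, 4] * c[5, 7, 8]

theorem coe_σ : ⇑σ = ![1, 2, 0, 4, 5, 3, 7, 8, 6] := by decide

theorem coe_τ₃ : ⇑τ₃ = ![1, 3, 6, 0, 2, 7, 4, 8, 5] := by decide

/-- The monodromy group of the dessin, generated by its monodromy pair. -/
def monodromyGroup : Subgroup (Perm (Fin 9)) := Subgroup.closure {σ, τ₃}

theorem σ_mem_monodromyGroup : σ ∈ monodromyGroup := Subgroup.subset_closure (.inl rfl)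

theorem τ₃_mem_monodromyGroup : τ₃ ∈ monodromyGroup := Subgroup.subset_closure (.inr rfl)

/-- The labels of the projective frame `∞, 0, 1` under the labelling `point`. -/
def frame : Fin 3 ↪ Fin 9 := ⟨![0, 7, 1], by decide⟩

theorem exists_mem_monodromyGroup_apply_zero (b : Fin 9) : ∃ g ∈ monodromyGroup, g 0 = b := by
  obtain ⟨k, hk⟩ : ∃ k : Fin 9, ((σ * τ₃) ^ (k : ℕ)) 0 = b := by
    revert b
    decide +kernel
  exact ⟨_, pow_mem (mul_mem σ_mem_monodromyGroup τ₃_mem_monodromyGroup) _, hk⟩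

theorem exists_mem_monodromyGroup_apply_one (b : Fin 9) (h0 : b ≠ 0) (h7 : b ≠ 7) :
    ∃ g ∈ monodromyGroup, g 0 = 0 ∧ g 7 = 7 ∧ g 1 = b := by
  obtain ⟨k, hk⟩ : ∃ k : Fin 7, ((σ⁻¹ * τ₃) ^ (k : ℕ)) 0 = 0 ∧
      ((σ⁻¹ * τ₃) ^ (k : ℕ)) 7 = 7 ∧ ((σ⁻¹ * τ₃) ^ (k : ℕ)) 1 = b := by
    revert b
    decide +kernel
  exact ⟨_, pow_mem (mul_mem (inv_mem σ_mem_monodromyGroup) τ₃_mem_monodromyGroup) _, hk⟩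

theorem exists_mem_monodromyGroup_apply_seven (b : Fin 9) (h0 : b ≠ 0) :
    ∃ g ∈ monodromyGroup, g 0 = 0 ∧ g 7 = b := by
  by_cases h7 : b = 7
  · exact ⟨1, one_mem _, rfl, h7.symm⟩
  obtain ⟨g, hg, hg0, -, hg1⟩ := exists_mem_monodromyGroup_apply_one b h0 h7
  have hu : σ * τ₃ * σ * τ₃⁻¹ ∈ monodromyGroup :=
    mul_mem (mul_mem (mul_mem σ_mem_monodromyGroup τ₃_mem_monodromyGroup) σ_mem_monodromyGroup)
      (inv_mem τ₃_mem_monodromyGroup)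
  have hu0 : (σ * τ₃ * σ * τ₃⁻¹) 0 = 0 := by decide +kernel
  have hu7 : (σ * τ₃ * σ * τ₃⁻¹) 7 = 1 := by decide +kernel
  exact ⟨g * (σ * τ₃ * σ * τ₃⁻¹), mul_mem hg hu, by rw [Perm.mul_apply, hu0, hg0],
    by rw [Perm.mul_apply, hu7, hg1]⟩

theorem isMultiplyPretransitive_monodromyGroup :
    IsMultiplyPretransitive monodromyGroup (Fin 9) 3 := by
  refine isMultiplyPretransitive_of_forall_exists frame fun i b hb ↦ ?_
  fin_cases i
  · obtain ⟨g, hg, hgb⟩ := exists_mem_monodromyGroup_apply_zero b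
    exact ⟨⟨g, hg⟩, by simp, hgb⟩
  · obtain ⟨g, hg, hg0, hgb⟩ := exists_mem_monodromyGroup_apply_seven b (hb 0 (by decide)).symm
    refine ⟨⟨g, hg⟩, fun j hj ↦ ?_, hgb⟩
    fin_cases j <;> first | exact hg0 | simp at hj
  · obtain ⟨g, hg, hg0, hg7, hgb⟩ := exists_mem_monodromyGroup_apply_one b
      (hb 0 (by decide)).symm (hb 1 (by decide)).symm
    refine ⟨⟨g, hg⟩, fun j hj ↦ ?_, hgb⟩
    fin_cases j <;> first | exact hg0 | exact hg7 | simp at hj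

end MonodromyGroup

section FieldWithEightElements

variable {F : Type*} [Field F]

theorem pow_seven_eq_one (hF : Nat.card F = 8) {x : F} (hx : x ≠ 0) : x ^ 7 = 1 := by
  have : Finite F := Nat.finite_of_card_ne_zero (by lia)
  have := Fintype.ofFinite F
  have hpow := FiniteField.pow_card_sub_one_eq_one x hx
  rwa [Fintype.card_eq_nat_card, hF] at hpow

theorem charP_two (hF : Nat.card F = 8) : CharP F 2 := by
  have : Finite F := Nat.finite_of_card_ne_zero (by lia)
  have := Fintype.ofFinite F
  exact charP_of_card_eq_prime_pow (f := 3) (by rw [Fintype.card_eq_nat_card, hF]; norm_num)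

theorem exists_pow_three_eq_add_one (hF : Nat.card F = 8) : ∃ α : F, α ^ 3 = α + 1 := by
  have := charP_two hF
  have : Finite F := Nat.finite_of_card_ne_zero (by lia)
  obtain ⟨x, hx0, hx1⟩ := ENat.exists_ne_ne_of_three_le (α := F)
    (by rw [ENat.card_eq_coe_natCard, hF]; norm_num) 0 1
  have hx7 : x ^ 7 = 1 := pow_seven_eq_one hF hx0
  have hfactor : (x ^ 3 + x + 1) * (x ^ 3 + x ^ 2 + 1) = 0 := by grind
  rcases mul_eq_zero.mp hfactor with h | h
  · exact ⟨x, by grind⟩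
  · exact ⟨x + 1, by grind⟩

/-- Homogeneous coordinates for the points labelled by `Fin 9`: label `0` is the point `∞`, and any
other label stands for the first coordinate of its entry. The labelling is the one for which `σ`
and `τ₃` become Möbius transformations when `α` is a root of `X ^ 3 + X + 1`. -/
def coords (α : F) : Fin 9 → Fin 2 → F :=
  ![![1, 0], ![1, 1], ![α ^ 3, 1], ![α ^ 4, 1], ![α, 1], ![α ^ 6, 1], ![α ^ 5, 1], ![0, 1],
    ![α ^ 2, 1]]

theorem coords_ne_zero (α : F) (i : Fin 9) : coords α i ≠ 0 := by
  fin_cases i <;> simp [coords]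

/-- The labelling of the projective line by `Fin 9` with homogeneous coordinates `coords`. -/
def point (α : F) (i : Fin 9) : ℙ F (Fin 2 → F) :=
  Projectivization.mk F (coords α i) (coords_ne_zero α i)

section Lift

variable [CharP F 2] {α : F} (hα : α ^ 3 = α + 1)

/-- The matrix inducing `σ` on the labelled points. Its Möbius transformation is determined by
`∞ ↦ 1`, `1 ↦ α ^ 3`, `α ^ 3 ↦ ∞`. -/
def liftσ : SL(2, F) :=
  ⟨!![α ^ 6, α ^ 4; α ^ 6, α ^ 2], by rw [Matrix.det_fin_two_of]; grind⟩

/-- The matrix inducing `τ₃` on the labelled points. Its Möbius transformation is determined by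
`∞ ↦ 1`, `1 ↦ α ^ 4`, `α ^ 4 ↦ ∞`. -/
def liftτ₃ : SL(2, F) :=
  ⟨!![α ^ 2, α; α ^ 2, α ^ 6], by rw [Matrix.det_fin_two_of]; grind⟩

theorem liftσ_smul_point (i : Fin 9) : liftσ hα • point α i = point α (σ i) := by
  rw [point, point, smul_mk, coe_σ]
  refine mk_eq_mk_of_mul_eq_mul _ _ ?_
  rw [Matrix.SpecialLinearGroup.smul_def, Matrix.smul_eq_mulVec]
  fin_cases i <;> simp [liftσ, coords] <;> grind

theorem liftτ₃_smul_point (i : Fin 9) : liftτ₃ hα • point α i = point α (τ₃ i) := by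
  rw [point, point, smul_mk, coe_τ₃]
  refine mk_eq_mk_of_mul_eq_mul _ _ ?_
  rw [Matrix.SpecialLinearGroup.smul_def, Matrix.smul_eq_mulVec]
  fin_cases i <;> simp [liftτ₃, coords] <;> grind

end Lift

variable (hF : Nat.card F = 8) {α : F} (hα : α ^ 3 = α + 1)
include hF hα

theorem point_surjective : Function.Surjective (point α) := by
  have := charP_two hF
  have : Fact (Nat.Prime 7) := ⟨by norm_num⟩
  have hprim : IsPrimitiveRoot α 7 :=
    IsPrimitiveRoot.iff_orderOf.mpr (orderOf_eq_prime (p := 7) (by grind) (by grind))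
  refine Projectivization.ind fun v hv ↦ ?_
  by_cases h1 : v 1 = 0
  · exact ⟨0, mk_eq_mk_of_mul_eq_mul _ _ (by simp [coords, h1])⟩
  by_cases h0 : v 0 = 0
  · exact ⟨7, mk_eq_mk_of_mul_eq_mul _ _ (by simp [coords, h0])⟩
  obtain ⟨k, hk, hpow⟩ := hprim.eq_pow_of_pow_eq_one (pow_seven_eq_one hF (div_ne_zero h0 h1))
  have hv0 : v 0 = α ^ k * v 1 := by rw [hpow, div_mul_cancel₀ _ h1]
  refine ⟨![1, 4, 8, 2, 3, 6, 5] ⟨k, hk⟩, mk_eq_mk_of_mul_eq_mul _ _ ?_⟩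
  interval_cases k <;> simp [coords, hv0]

theorem point_bijective : Function.Bijective (point α) := by
  have : Finite F := Nat.finite_of_card_ne_zero (by lia)
  refine (point_surjective hF hα).bijective_of_nat_card_le ?_
  rw [Projectivization.card_of_finrank_two F _ (Module.finrank_fin_fun F), hF, Nat.card_fin]

/-- `point` as an equivalence between the labels and the projective line. -/
noncomputable def pointEquiv : Fin 9 ≃ ℙ F (Fin 2 → F) :=
  .ofBijective (point α) (point_bijective hF hα)

theorem monodromyGroup_le_range_permHom :
    monodromyGroup ≤ (permHom (pointEquiv hF hα)).range := by
  have := charP_two hF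
  rw [monodromyGroup, Subgroup.closure_le, Set.pair_subset_iff]
  exact ⟨⟨liftσ hα, permHom_mk_eq _ (liftσ_smul_point hα)⟩,
    ⟨liftτ₃ hα, permHom_mk_eq _ (liftτ₃_smul_point hα)⟩⟩

theorem disjoint_range_permHom_stabilizer_frame :
    Disjoint (permHom (pointEquiv hF hα)).range (stabilizer (Perm (Fin 9)) frame) := by
  rw [Subgroup.disjoint_def]
  rintro _ ⟨q, rfl⟩ hq
  obtain ⟨g, rfl⟩ := QuotientGroup.mk_surjective q
  have hfix (i : Fin 3) : g • point α (frame i) = point α (frame i) :=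
    (apply_permHom_mk (pointEquiv hF hα) g (frame i)).symm.trans
      (congrArg _ (DFunLike.congr_fun hq i))
  have hmk (i : Fin 3) (v : Fin 2 → F) (hv : v ≠ 0) (hi : coords α (frame i) = v) :
      g • Projectivization.mk F v hv = Projectivization.mk F v hv := by
    subst hi
    exact hfix i
  have hg : g ∈ Subgroup.center SL(2, F) := by
    refine mem_center_of_smul_frame (Fin.forall_fin_two.mpr ⟨hmk 0 _ _ ?_, hmk 1 _ _ ?_⟩)
      (hmk 2 _ _ ?_) <;>
    ext j <;> fin_cases j <;> simp [coords, frame]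
  rw [(QuotientGroup.eq_one_iff g).mpr hg, map_one]

end FieldWithEightElements

end Dessin

open Dessin in
theorem stmt12_general {F : Type*} [Field F] (hF : Nat.card F = 8) :
    let σ : Equiv.Perm (Fin 9) := c[0, 1, 2] * c[3, 4, 5] * c[6, 7, 8]
    let τ₃ : Equiv.Perm (Fin 9) := c[0, 1, 3] * c[2, 6, 4] * c[5, 7, 8]
    let H := Subgroup.closure ({σ, τ₃} : Set (Equiv.Perm (Fin 9)))
    Nonempty (H ≃* Matrix.ProjectiveSpecialLinearGroup (Fin 2) F) ∧
      Nat.card H = 504 := by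
  change Nonempty (monodromyGroup ≃* _) ∧ Nat.card monodromyGroup = 504
  obtain ⟨α, hα⟩ := exists_pow_three_eq_add_one hF
  have hle := monodromyGroup_le_range_permHom hF hα
  have htrans := isMultiplyPretransitive_monodromyGroup
  have hdisj := disjoint_range_permHom_stabilizer_frame hF hα
  have heq := eq_of_isPretransitive_of_disjoint_stabilizer hle htrans hdisj
  constructor
  · exact ⟨(MulEquiv.subgroupCongr heq).trans (MonoidHom.ofInjective (permHom_injective _)).symm⟩
  · calc
      Nat.card monodromyGroup = Nat.card (Fin 3 ↪ Fin 9) :=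
        card_eq_of_disjoint_stabilizer htrans (hdisj.mono_left hle)
      _ = Nat.descFactorial 9 3 := by simp
      _ = 504 := rfl

theorem stmt12 :
    let σ : Equiv.Perm (Fin 9) := c[0, 1, 2] * c[3, 4, 5] * c[6, 7, 8]
    let τ₃ : Equiv.Perm (Fin 9) := c[0, 1, 3] * c[2, 6, 4] * c[5, 7, 8]
    let H := Subgroup.closure ({σ, τ₃} : Set (Equiv.Perm (Fin 9)))
    Nonempty (H ≃* Matrix.ProjectiveSpecialLinearGroup (Fin 2) (GaloisField 2 3)) ∧
      Nat.card H = 504 :=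
  stmt12_general (GaloisField.card 2 3 (by norm_num))
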